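/- arXiv:1409.3902 — 7 statements merged into one kernel-verified Lean document; each statement's English description precedes it below -/
import Mathlib

section
/- The supremum of S(τ, p_p, p_u) over all feasible triples for problem P₁ equals the supremum of the function p_u ↦ S(K, (P − (T − K)·p_u)/K, p_u) over p_u ∈ [0, P/(T − K)]. In other words, problem P₁ is equivalent to the one-dimensional problem P₂ obtained by setting τ = K and p_p = (P − (T − K)p_u)/K. -/
open Finset

/-- Sum spectral efficiency `S(τ, p_p, p_u)` for `K` terminals with constants `a b c d`. -/
noncomputable def sumSE (T K : ℕ) (a b c d : Fin K → ℝ) (τ pp pu : ℝ) : ℝ :=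
  (1 - τ / T) * ∑ k : Fin K, Real.logb 2
    (1 + a k * τ * pp * pu / (b k * τ * pp * pu + c k * pu + d k * τ * pp + 1))

/-- Feasibility for problem `P₁`. -/
def FeasibleP1 (T K : ℕ) (P : ℝ) (τ : ℕ) (pp pu : ℝ) : Prop :=
  K ≤ τ ∧ τ ≤ T ∧ 0 ≤ pp ∧ 0 ≤ pu ∧ (τ : ℝ) * pp + ((T : ℝ) - τ) * pu = P

/-- Scaling inequality `θ R(x) ≤ R(θ x)` for the rate, from concavity. -/
lemma rate_scale (A B C D x θ : ℝ) (hA : 0 ≤ A) (hB : 0 ≤ B) (hC : 0 ≤ C) (hD : 0 ≤ D)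
    (hx : 0 ≤ x) (h0 : 0 ≤ θ) (h1 : θ ≤ 1) :
    θ * Real.logb 2 (1 + A * x / (B * x + C * x + D + 1)) ≤
      Real.logb 2 (1 + A * (θ * x) / (B * (θ * x) + C * (θ * x) + D + 1)) := by
  have hy : 0 ≤ A * x / (B * x + C * x + D + 1) := by positivity
  have hle : θ * (A * x / (B * x + C * x + D + 1)) ≤
      A * (θ * x) / (B * (θ * x) + C * (θ * x) + D + 1) := by
    have e : θ * (A * x / (B * x + C * x + D + 1)) =
        A * (θ * x) / (B * x + C * x + D + 1) := by ring
    rw [e]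
    have hxx : θ * x ≤ x := mul_le_of_le_one_left hx h1
    gcongr
  have hpow := rpow_one_add_le_one_add_mul_self
    (s := A * x / (B * x + C * x + D + 1)) (by linarith) h0 h1
  rw [← Real.logb_rpow_eq_mul_logb_of_pos (by positivity)]
  exact Real.logb_le_logb_of_le (by norm_num) (by positivity) (by linarith)

theorem stmt_1 (T K : ℕ) (hK : 0 < K) (hKT : K < T) (P : ℝ) (hP : 0 < P)
    (a b c d : Fin K → ℝ) (ha : ∀ k, 0 < a k) (hb : ∀ k, 0 ≤ b k)
    (hc : ∀ k, 0 ≤ c k) (hd : ∀ k, 0 ≤ d k) :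
    sSup {s : ℝ | ∃ (τ : ℕ) (pp pu : ℝ), FeasibleP1 T K P τ pp pu ∧
        s = sumSE T K a b c d τ pp pu} =
    sSup {s : ℝ | ∃ pu ∈ Set.Icc (0 : ℝ) (P / ((T : ℝ) - K)),
        s = sumSE T K a b c d K ((P - ((T : ℝ) - K) * pu) / K) pu} := by
  have hKr : (0 : ℝ) < K := by exact_mod_cast hK
  have hKTr : (K : ℝ) < T := by exact_mod_cast hKT
  have hTr : (0 : ℝ) < T := hKr.trans hKTr
  have hTK : (0 : ℝ) < (T : ℝ) - K := by linarith
  apply csSup_eq_csSup_of_forall_exists_le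
  · rintro s ⟨τ, pp, pu, ⟨h1, h2, hpp, hpu, hE⟩, rfl⟩
    have h1r : (K : ℝ) ≤ τ := by exact_mod_cast h1
    have h2r : (τ : ℝ) ≤ T := by exact_mod_cast h2
    have hτ : (0 : ℝ) < τ := hKr.trans_le h1r
    obtain ⟨θ, hθ⟩ : ∃ θ : ℝ, θ = ((T : ℝ) - τ) / ((T : ℝ) - K) := ⟨_, rfl⟩
    have hθm : ((T : ℝ) - K) * θ = (T : ℝ) - τ := by rw [hθ]; field_simp
    have hθ0 : 0 ≤ θ := by rw [hθ]; exact div_nonneg (by linarith) hTK.le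
    have hθ1 : θ ≤ 1 := by rw [hθ, div_le_one hTK]; linarith
    have hEE : P - ((T : ℝ) - K) * (θ * pu) = τ * pp := by
      rw [← mul_assoc, hθm]; linarith
    refine ⟨_, ⟨θ * pu, ⟨by positivity, ?_⟩, rfl⟩, ?_⟩
    · rw [le_div_iff₀ hTK]
      have : 0 ≤ (τ : ℝ) * pp := by positivity
      linarith
    · rw [hEE]
      unfold sumSE
      have e1 : 1 - (τ : ℝ) / T = (1 - (K : ℝ) / T) * θ := by
        field_simp
        linarith
      rw [e1, mul_assoc, Finset.mul_sum]
      have hf : 0 ≤ 1 - (K : ℝ) / T := by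
        rw [sub_nonneg, div_le_one hTr]; exact hKTr.le
      refine mul_le_mul_of_nonneg_left (Finset.sum_le_sum fun k _ => ?_) hf
      have hak := (ha k).le
      have hbk := hb k
      have hdk := hd k
      have key := rate_scale (a k * τ * pp) (b k * τ * pp) (c k) (d k * τ * pp) pu θ
        (by positivity) (by positivity) (hc k) (by positivity) hpu hθ0 hθ1
      have ex : ∀ z : ℝ, z * K * (τ * pp / K) = z * τ * pp := by
        intro z; field_simp
      rw [ex, ex, ex]
      exact key
  · rintro s ⟨pu, ⟨h0, h1⟩, rfl⟩
    rw [le_div_iff₀ hTK] at h1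
    refine ⟨_, ⟨K, (P - ((T : ℝ) - K) * pu) / K, pu,
      ⟨le_rfl, hKT.le, div_nonneg (by linarith) hKr.le, h0, ?_⟩, rfl⟩, le_rfl⟩
    field_simp
    ring
end

section
/- The objective function of problem P₂, namely p ↦ (1 − K/T) · Σ_{k=1}^K log₂(1 + f_k(p)), is a concave function of p on the interval [0, P/(T − K)]; that is, problem P₂ is a concave program. -/
open Finset

lemma aux_h (m P c d : ℝ) (hm : 0 < m) (hP : 0 < P) (hc : 0 ≤ c) (hd : 0 ≤ d)
    (x y s t : ℝ) (hx : 0 ≤ x) (hx' : 0 ≤ P - m * x) (hy : 0 ≤ y) (hy' : 0 ≤ P - m * y)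
    (hs : 0 ≤ s) (ht : 0 ≤ t) (hst : s + t = 1) :
    s * ((P - m * x) * x / (c * x + d * (P - m * x) + 1)) +
      t * ((P - m * y) * y / (c * y + d * (P - m * y) + 1)) ≤
    (P - m * (s * x + t * y)) * (s * x + t * y) /
      (c * (s * x + t * y) + d * (P - m * (s * x + t * y)) + 1) := by
  have h1 : 0 < c * x + d * (P - m * x) + 1 := by positivity
  have h2 : 0 < c * y + d * (P - m * y) + 1 := by positivity
  have e : c * (s * x + t * y) + d * (P - m * (s * x + t * y)) + 1 =
      s * (c * x + d * (P - m * x) + 1) + t * (c * y + d * (P - m * y) + 1) := by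
    have : s = 1 - t := by linarith
    subst this; ring
  have h3 : 0 < c * (s * x + t * y) + d * (P - m * (s * x + t * y)) + 1 := by
    have h4 : 0 ≤ P - m * (s * x + t * y) := by
      have : P - m * (s * x + t * y) = s * (P - m * x) + t * (P - m * y) := by
        have : s = 1 - t := by linarith
        subst this; ring
      rw [this]; positivity
    positivity
  rw [← sub_nonneg]
  have key : (P - m * (s * x + t * y)) * (s * x + t * y) /
      (c * (s * x + t * y) + d * (P - m * (s * x + t * y)) + 1) -
      (s * ((P - m * x) * x / (c * x + d * (P - m * x) + 1)) +
      t * ((P - m * y) * y / (c * y + d * (P - m * y) + 1))) =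
      s * t * (x - y) ^ 2 * ((d * P + 1) * (c * P + m)) /
      ((c * (s * x + t * y) + d * (P - m * (s * x + t * y)) + 1) *
        (c * x + d * (P - m * x) + 1) * (c * y + d * (P - m * y) + 1)) := by
    rw [eq_div_iff (by positivity)]
    have k : ∀ A B C X Y Z : ℝ, 0 < X → 0 < Y → 0 < Z →
        (A / Z - (s * (B / X) + t * (C / Y))) * (Z * X * Y) =
        A * X * Y - s * B * Y * Z - t * C * X * Z := by
      intro A B C X Y Z hX hY hZ
      field_simp
      ring
    rw [k _ _ _ _ _ _ h1 h2 h3]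
    have : s = 1 - t := by linarith
    subst this; ring
  rw [key]
  positivity

lemma aux_phi (a b : ℝ) (ha : 0 < a) (hb : 0 ≤ b) (u v w s t : ℝ) (hu : 0 ≤ u) (hv : 0 ≤ v)
    (hs : 0 ≤ s) (ht : 0 ≤ t) (hst : s + t = 1) (hw : s * u + t * v ≤ w) :
    s * (a * u / (b * u + 1)) + t * (a * v / (b * v + 1)) ≤ a * w / (b * w + 1) := by
  have h0 : 0 ≤ s * u + t * v := by positivity
  have hw0 : 0 ≤ w := h0.trans hw
  have step : a * (s * u + t * v) / (b * (s * u + t * v) + 1) ≤ a * w / (b * w + 1) := by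
    rw [div_le_div_iff₀ (by positivity) (by positivity)]
    nlinarith
  refine le_trans ?_ step
  rw [← sub_nonneg]
  have key : a * (s * u + t * v) / (b * (s * u + t * v) + 1) -
      (s * (a * u / (b * u + 1)) + t * (a * v / (b * v + 1))) =
      s * t * (u - v) ^ 2 * (a * b) / ((b * (s * u + t * v) + 1) * (b * u + 1) * (b * v + 1)) := by
    have h1 : b * u + 1 ≠ 0 := by positivity
    have h2 : b * v + 1 ≠ 0 := by positivity
    have h3 : b * (s * u + t * v) + 1 ≠ 0 := by positivity
    have : s = 1 - t := by linarith
    subst this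
    field_simp
    ring
  rw [key]
  positivity

theorem stmt_2 (T K : ℕ) (hK : 0 < K) (hKT : K < T) (P : ℝ) (hP : 0 < P)
    (a b c d : Fin K → ℝ) (ha : ∀ k, 0 < a k) (hb : ∀ k, 0 ≤ b k)
    (hc : ∀ k, 0 ≤ c k) (hd : ∀ k, 0 ≤ d k) :
    ConcaveOn ℝ (Set.Icc (0 : ℝ) (P / ((T : ℝ) - K)))
      (fun p => (1 - (K : ℝ) / T) * ∑ k : Fin K, Real.logb 2
        (1 + a k * (P - ((T : ℝ) - K) * p) * p /
          (b k * (P - ((T : ℝ) - K) * p) * p + c k * p +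
            d k * (P - ((T : ℝ) - K) * p) + 1))) := by
  have hKT' : (K : ℝ) < T := by exact_mod_cast hKT
  have hm : (0 : ℝ) < (T : ℝ) - K := by linarith
  have hT : (0 : ℝ) < T := lt_of_le_of_lt (Nat.cast_nonneg K) hKT'
  have hfac : 0 ≤ 1 - (K : ℝ) / T := by
    rw [sub_nonneg, div_le_one hT]; exact hKT'.le
  generalize (T : ℝ) - K = m at hm ⊢
  have hmem : ∀ x ∈ Set.Icc (0 : ℝ) (P / m), 0 ≤ x ∧ 0 ≤ P - m * x := by
    rintro x ⟨h1, h2⟩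
    rw [le_div_iff₀ hm] at h2
    exact ⟨h1, by linarith⟩
  refine ⟨convex_Icc _ _, ?_⟩
  intro x hx y hy s t hs ht hst
  have hz := hmem _ ((convex_Icc (0 : ℝ) (P / m)) hx hy hs ht hst)
  obtain ⟨hx, hx'⟩ := hmem x hx
  obtain ⟨hy, hy'⟩ := hmem y hy
  simp only [smul_eq_mul] at hz ⊢
  obtain ⟨hz, hz'⟩ := hz
  rw [mul_left_comm s, mul_left_comm t, ← mul_add]
  refine mul_le_mul_of_nonneg_left ?_ hfac
  rw [Finset.mul_sum, Finset.mul_sum, ← Finset.sum_add_distrib]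
  refine Finset.sum_le_sum fun k _ => ?_
  have hak := ha k
  have hbk := hb k
  have hck := hc k
  have hdk := hd k
  have rew : ∀ p, 0 ≤ p → 0 ≤ P - m * p →
      a k * (P - m * p) * p / (b k * (P - m * p) * p + c k * p + d k * (P - m * p) + 1) =
      a k * ((P - m * p) * p / (c k * p + d k * (P - m * p) + 1)) /
        (b k * ((P - m * p) * p / (c k * p + d k * (P - m * p) + 1)) + 1) := by
    intro p h1 h2
    generalize P - m * p = q at h2 ⊢
    have e1 : c k * p + d k * q + 1 ≠ 0 := by positivity
    have e2 : b k * q * p + c k * p + d k * q + 1 ≠ 0 := by positivity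
    have e3 : b k * (q * p / (c k * p + d k * q + 1)) + 1 ≠ 0 := by positivity
    rw [div_eq_div_iff e2 e3]
    field_simp
    ring
  have hf : ∀ p, 0 ≤ p → 0 ≤ P - m * p → 0 ≤
      a k * (P - m * p) * p / (b k * (P - m * p) * p + c k * p + d k * (P - m * p) + 1) := by
    intro p h1 h2
    positivity
  have hfx := hf x hx hx'
  have hfy := hf y hy hy'
  have main := aux_phi (a k) (b k) hak hbk _ _ _ s t
    (by positivity) (by positivity) hs ht hst
    (aux_h m P (c k) (d k) hm hP hck hdk x y s t hx hx' hy hy' hs ht hst)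
  rw [← rew x hx hx', ← rew y hy hy', ← rew _ hz hz'] at main
  generalize a k * (P - m * x) * x /
    (b k * (P - m * x) * x + c k * x + d k * (P - m * x) + 1) = F at *
  generalize a k * (P - m * y) * y /
    (b k * (P - m * y) * y + c k * y + d k * (P - m * y) + 1) = G at *
  have hlog := strictConcaveOn_log_Ioi.concaveOn.2 (x := 1 + F) (y := 1 + G)
    (Set.mem_Ioi.2 (by positivity)) (Set.mem_Ioi.2 (by positivity)) hs ht hst
  simp only [smul_eq_mul] at hlog
  have hl2 : 0 < Real.log 2 := Real.log_pos (by norm_num)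
  simp only [Real.logb]
  rw [← mul_div_assoc, ← mul_div_assoc, ← add_div]
  refine div_le_div_of_nonneg_right (hlog.trans ?_) hl2.le
  apply Real.log_le_log
  · have : s * (1 + F) + t * (1 + G) = 1 + (s * F + t * G) := by
      linear_combination hst
    rw [this]; positivity
  · linarith
end

section
/- For each k, the function f_k(p) = a_k (P − (T − K)p) p / (b_k (P − (T − K)p) p + c_k p + d_k (P − (T − K)p) + 1) is concave on the interval [0, P/(T − K)]. -/
theorem aux_g (m P c d x y s t : ℝ) (hm : 0 < m) (hP : 0 < P) (hc : 0 ≤ c) (hd : 0 ≤ d)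
    (hs : 0 ≤ s) (ht : 0 ≤ t) (hst : s + t = 1)
    (hx : 0 < c * x + d * (P - m * x) + 1) (hy : 0 < c * y + d * (P - m * y) + 1)
    (hz : 0 < c * (s * x + t * y) + d * (P - m * (s * x + t * y)) + 1) :
    s * ((P - m * x) * x / (c * x + d * (P - m * x) + 1)) +
      t * ((P - m * y) * y / (c * y + d * (P - m * y) + 1)) ≤
    (P - m * (s * x + t * y)) * (s * x + t * y) /
      (c * (s * x + t * y) + d * (P - m * (s * x + t * y)) + 1) := by
  have key : (P - m * (s * x + t * y)) * (s * x + t * y) /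
      (c * (s * x + t * y) + d * (P - m * (s * x + t * y)) + 1) -
      (s * ((P - m * x) * x / (c * x + d * (P - m * x) + 1)) +
      t * ((P - m * y) * y / (c * y + d * (P - m * y) + 1))) =
      s * t * (x - y) ^ 2 * ((d * P + 1) * (m + c * P)) /
      ((c * x + d * (P - m * x) + 1) * (c * y + d * (P - m * y) + 1) *
      (c * (s * x + t * y) + d * (P - m * (s * x + t * y)) + 1)) := by
    have h1 := hx.ne'
    have h2 := hy.ne'
    have h3 := hz.ne'
    obtain rfl : t = 1 - s := by linarith
    rw [mul_div_assoc', mul_div_assoc', div_add_div _ _ h1 h2, div_sub_div _ _ h3 (mul_ne_zero h1 h2),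
      div_eq_div_iff (mul_ne_zero h3 (mul_ne_zero h1 h2)) (mul_ne_zero (mul_ne_zero h1 h2) h3)]
    ring
  have : 0 ≤ s * t * (x - y) ^ 2 * ((d * P + 1) * (m + c * P)) /
      ((c * x + d * (P - m * x) + 1) * (c * y + d * (P - m * y) + 1) *
      (c * (s * x + t * y) + d * (P - m * (s * x + t * y)) + 1)) := by positivity
  linarith

theorem aux_h_s3 (a b X Y Z s t : ℝ) (ha : 0 < a) (hb : 0 ≤ b) (hX : 0 ≤ X) (hY : 0 ≤ Y)
    (hs : 0 ≤ s) (ht : 0 ≤ t) (hst : s + t = 1) (hZ : s * X + t * Y ≤ Z) :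
    s * (a * X / (b * X + 1)) + t * (a * Y / (b * Y + 1)) ≤ a * Z / (b * Z + 1) := by
  have hW : 0 ≤ s * X + t * Y := by positivity
  have hZ0 : 0 ≤ Z := hW.trans hZ
  have hmono : a * (s * X + t * Y) / (b * (s * X + t * Y) + 1) ≤ a * Z / (b * Z + 1) := by
    rw [div_le_div_iff₀ (by positivity) (by positivity)]
    nlinarith [mul_le_mul_of_nonneg_left hZ ha.le]
  have key : a * (s * X + t * Y) / (b * (s * X + t * Y) + 1) -
      (s * (a * X / (b * X + 1)) + t * (a * Y / (b * Y + 1))) =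
      s * t * (X - Y) ^ 2 * (a * b) / ((b * X + 1) * (b * Y + 1) * (b * (s * X + t * Y) + 1)) := by
    have h1 : b * X + 1 ≠ 0 := by positivity
    have h2 : b * Y + 1 ≠ 0 := by positivity
    have h3 : b * (s * X + t * Y) + 1 ≠ 0 := by positivity
    obtain rfl : t = 1 - s := by linarith
    rw [mul_div_assoc', mul_div_assoc', div_add_div _ _ h1 h2, div_sub_div _ _ h3 (mul_ne_zero h1 h2),
      div_eq_div_iff (mul_ne_zero h3 (mul_ne_zero h1 h2)) (mul_ne_zero (mul_ne_zero h1 h2) h3)]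
    ring
  have : 0 ≤ s * t * (X - Y) ^ 2 * (a * b) /
    ((b * X + 1) * (b * Y + 1) * (b * (s * X + t * Y) + 1)) := by positivity
  linarith

theorem aux_f (a b u p L : ℝ) (hb : 0 ≤ b) (hu : 0 ≤ u) (hp : 0 ≤ p) (hL : 0 < L) :
    a * u * p / (b * u * p + L) = a * (u * p / L) / (b * (u * p / L) + 1) := by
  have h1 : b * u * p + L ≠ 0 := by positivity
  have h2 : b * (u * p / L) + 1 ≠ 0 := by positivity
  rw [div_eq_div_iff h1 h2]
  field_simp

theorem stmt_3 (T K : ℕ) (hK : 0 < K) (hKT : K < T) (P : ℝ) (hP : 0 < P)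
    (a b c d : ℝ) (ha : 0 < a) (hb : 0 ≤ b) (hc : 0 ≤ c) (hd : 0 ≤ d) :
    ConcaveOn ℝ (Set.Icc (0 : ℝ) (P / ((T : ℝ) - K)))
      (fun p => a * (P - ((T : ℝ) - K) * p) * p /
        (b * (P - ((T : ℝ) - K) * p) * p + c * p +
          d * (P - ((T : ℝ) - K) * p) + 1)) := by
  have hm : (0 : ℝ) < (T : ℝ) - K := sub_pos.2 (by exact_mod_cast hKT)
  generalize (T : ℝ) - K = m at hm
  have hu : ∀ p ∈ Set.Icc (0 : ℝ) (P / m), 0 ≤ P - m * p := by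
    intro p hp
    have := (le_div_iff₀ hm).1 hp.2
    linarith
  have hL : ∀ p ∈ Set.Icc (0 : ℝ) (P / m), 0 < c * p + d * (P - m * p) + 1 := by
    intro p hp
    have h1 := hu p hp
    have h2 := hp.1
    positivity
  have hf : ∀ p ∈ Set.Icc (0 : ℝ) (P / m),
      a * (P - m * p) * p / (b * (P - m * p) * p + c * p + d * (P - m * p) + 1) =
      a * ((P - m * p) * p / (c * p + d * (P - m * p) + 1)) /
        (b * ((P - m * p) * p / (c * p + d * (P - m * p) + 1)) + 1) := by
    intro p hp
    rw [← aux_f a b _ p _ hb (hu p hp) hp.1 (hL p hp)]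
    congr 1
    ring
  refine ⟨convex_Icc _ _, ?_⟩
  intro x hx y hy s t hs ht hst
  have hz := convex_Icc (0 : ℝ) (P / m) hx hy hs ht hst
  simp only [smul_eq_mul] at hz ⊢
  rw [hf x hx, hf y hy, hf _ hz]
  exact aux_h_s3 a b _ _ _ s t ha hb
    (div_nonneg (mul_nonneg (hu x hx) hx.1) (hL x hx).le)
    (div_nonneg (mul_nonneg (hu y hy) hy.1) (hL y hy).le) hs ht hst
    (aux_g m P c d x y s t hm hP hc hd hs ht hst (hL x hx) (hL y hy) (hL _ hz))
end

section
/- The supremum of S(τ, p_p, p_u) over all (τ, p_p, p_u) with τ an integer, K ≤ τ ≤ T, p_p ≥ 0, p_u ≥ 0, and the inequality constraint τ·p_p + (T − τ)·p_u ≤ P equals the supremum of S over the same set with the constraint replaced by the equality τ·p_p + (T − τ)·p_u = P. In particular, for every point satisfying the strict inequality τ·p_p + (T − τ)·p_u < P with τ < T, there is a point satisfying the equality whose sum spectral efficiency is at least as large. -/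
open Finset

theorem frac_mono {A B D c x y : ℝ} (hA : 0 ≤ A) (hB : 0 ≤ B) (hc : 0 ≤ c) (hD : 0 ≤ D)
    (hx : 0 ≤ x) (hxy : x ≤ y) :
    A * x / (B * x + c * x + D + 1) ≤ A * y / (B * y + c * y + D + 1) := by
  have hy : 0 ≤ y := hx.trans hxy
  rw [div_le_div_iff₀ (by positivity) (by positivity)]
  have : 0 ≤ A * (y - x) * (D + 1) := by
    have := sub_nonneg.2 hxy
    positivity
  nlinarith

theorem sumSE_mono (T K : ℕ) (a b c d : Fin K → ℝ) (ha : ∀ k, 0 < a k) (hb : ∀ k, 0 ≤ b k)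
    (hc : ∀ k, 0 ≤ c k) (hd : ∀ k, 0 ≤ d k) (τ : ℕ) (hτ : τ ≤ T) (hT : 0 < T)
    (pp pu pu' : ℝ) (hpp : 0 ≤ pp) (hpu : 0 ≤ pu) (h : pu ≤ pu') :
    sumSE T K a b c d τ pp pu ≤ sumSE T K a b c d τ pp pu' := by
  unfold sumSE
  have hT' : (0 : ℝ) < T := by exact_mod_cast hT
  have h1 : (τ : ℝ) / T ≤ 1 := by
    rw [div_le_one hT']
    exact_mod_cast hτ
  apply mul_le_mul_of_nonneg_left _ (sub_nonneg.2 h1)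
  apply Finset.sum_le_sum
  intro k _
  have hak := (ha k).le
  have hbk := hb k
  have hck := hc k
  have hdk := hd k
  apply Real.logb_le_logb_of_le (by norm_num)
  · positivity
  · have := frac_mono (A := a k * τ * pp) (B := b k * τ * pp) (D := d k * τ * pp) (c := c k)
      (by positivity) (by positivity) hck (by positivity) hpu h
    linarith

theorem stmt_9 (T K : ℕ) (hK : 0 < K) (hKT : K < T) (P : ℝ) (hP : 0 < P)
    (a b c d : Fin K → ℝ) (ha : ∀ k, 0 < a k) (hb : ∀ k, 0 ≤ b k)
    (hc : ∀ k, 0 ≤ c k) (hd : ∀ k, 0 ≤ d k) :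
    sSup {s : ℝ | ∃ (τ : ℕ) (pp pu : ℝ), K ≤ τ ∧ τ ≤ T ∧ 0 ≤ pp ∧ 0 ≤ pu ∧
        (τ : ℝ) * pp + ((T : ℝ) - τ) * pu ≤ P ∧ s = sumSE T K a b c d τ pp pu} =
    sSup {s : ℝ | ∃ (τ : ℕ) (pp pu : ℝ), K ≤ τ ∧ τ ≤ T ∧ 0 ≤ pp ∧ 0 ≤ pu ∧
        (τ : ℝ) * pp + ((T : ℝ) - τ) * pu = P ∧ s = sumSE T K a b c d τ pp pu} ∧
    (∀ (τ : ℕ) (pp pu : ℝ), K ≤ τ → τ ≤ T → 0 ≤ pp → 0 ≤ pu →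
      (τ : ℝ) * pp + ((T : ℝ) - τ) * pu < P → τ < T →
      ∃ (τ' : ℕ) (pp' pu' : ℝ), K ≤ τ' ∧ τ' ≤ T ∧ 0 ≤ pp' ∧ 0 ≤ pu' ∧
        (τ' : ℝ) * pp' + ((T : ℝ) - τ') * pu' = P ∧
        sumSE T K a b c d τ pp pu ≤ sumSE T K a b c d τ' pp' pu') := by
  have hT : 0 < T := hK.trans hKT
  have hT' : (0 : ℝ) < T := by exact_mod_cast hT
  have key : ∀ (τ : ℕ) (pp pu : ℝ), K ≤ τ → τ ≤ T → 0 ≤ pp → 0 ≤ pu →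
      (τ : ℝ) * pp + ((T : ℝ) - τ) * pu ≤ P →
      ∃ (τ' : ℕ) (pp' pu' : ℝ), K ≤ τ' ∧ τ' ≤ T ∧ 0 ≤ pp' ∧ 0 ≤ pu' ∧
        (τ' : ℝ) * pp' + ((T : ℝ) - τ') * pu' = P ∧
        sumSE T K a b c d τ pp pu ≤ sumSE T K a b c d τ' pp' pu' := by
    intro τ pp pu hKτ hτ hpp hpu hle
    rcases hτ.lt_or_eq with hlt | rfl
    · have hpos : (0 : ℝ) < (T : ℝ) - τ := by
        rw [sub_pos]
        exact_mod_cast hlt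
      have hge : pu ≤ (P - τ * pp) / ((T : ℝ) - τ) := by
        rw [le_div_iff₀ hpos]
        linarith
      refine ⟨τ, pp, (P - τ * pp) / ((T : ℝ) - τ), hKτ, hτ, hpp, hpu.trans hge, ?_,
        sumSE_mono T K a b c d ha hb hc hd τ hτ hT pp pu _ hpp hpu hge⟩
      rw [mul_div_cancel₀ _ hpos.ne']
      ring
    · refine ⟨τ, P / τ, 0, hKτ, le_rfl, by positivity, le_rfl, ?_, ?_⟩
      · field_simp
        ring
      · simp [sumSE, hT'.ne']
  refine ⟨?_, fun τ pp pu h1 h2 h3 h4 h5 _ => key τ pp pu h1 h2 h3 h4 h5.le⟩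
  apply csSup_eq_csSup_of_forall_exists_le
  · rintro s ⟨τ, pp, pu, h1, h2, h3, h4, h5, rfl⟩
    obtain ⟨τ', pp', pu', g1, g2, g3, g4, g5, g6⟩ := key τ pp pu h1 h2 h3 h4 h5
    exact ⟨_, ⟨τ', pp', pu', g1, g2, g3, g4, g5, rfl⟩, g6⟩
  · rintro s ⟨τ, pp, pu, h1, h2, h3, h4, h5, rfl⟩
    exact ⟨_, ⟨τ, pp, pu, h1, h2, h3, h4, h5.le, rfl⟩, le_rfl⟩
end

section
/- Fix τ with 0 < τ < T and set the pilot power equal to the data power, p_p = p_u, and regard S(p_u) = (1 − τ/T) Σ_{k=1}^K log₂(1 + a_k τ p_u² / (b_k τ p_u² + c_k p_u + d_k τ p_u + 1)) as a function of p_u. Then, as p_u → 0⁺, S(p_u) = (log₂ e)·(1 − τ/T)·(Σ_{k=1}^K a_k τ)·p_u² + O(p_u³); that is, the function p_u ↦ S(p_u) − (log₂ e)(1 − τ/T)(Σ_k a_k τ)p_u² is O(p_u³) in a right neighborhood of 0 (the "squaring effect": with equal pilot and data powers the sum spectral efficiency scales as p_u²). -/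
open Finset Filter Asymptotics Topology

theorem aux_log (A B C : ℝ) (hA : 0 < A) (hB : 0 ≤ B) (hC : 0 ≤ C) (x : ℝ) (hx : 0 < x)
    (hx1 : x < 1) :
    |Real.log (1 + A * x ^ 2 / (B * x ^ 2 + C * x + 1)) - A * x ^ 2| ≤
      A * (A + B + C) * x ^ 3 := by
  have hD : 1 ≤ B * x ^ 2 + C * x + 1 := by
    have : 0 ≤ B * x ^ 2 + C * x := by positivity
    linarith
  have hDle : B * x ^ 2 + C * x + 1 + A * x ^ 2 ≤ 1 + (A + B + C) * x := by
    have h2 : x ^ 2 ≤ x := by nlinarith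
    nlinarith [mul_le_mul_of_nonneg_left h2 hB, mul_le_mul_of_nonneg_left h2 hA.le]
  generalize B * x ^ 2 + C * x + 1 = D at hD hDle
  have hD0 : 0 < D := by linarith
  have hAx : 0 < A * x ^ 2 := by positivity
  have hpos : 0 < 1 + A * x ^ 2 / D := by positivity
  have h1 := Real.log_le_sub_one_of_pos hpos
  have h2 := Real.one_sub_inv_le_log_of_pos hpos
  have h3 : A * x ^ 2 / D ≤ A * x ^ 2 := div_le_self hAx.le hD
  have h4 : 1 - (1 + A * x ^ 2 / D)⁻¹ = A * x ^ 2 / (D + A * x ^ 2) := by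
    field_simp
    ring
  have h5 : A * x ^ 2 - A * (A + B + C) * x ^ 3 ≤ A * x ^ 2 / (D + A * x ^ 2) := by
    rw [le_div_iff₀ (by positivity)]
    have hs : 0 ≤ (A + B + C) * x := by positivity
    have key : (1 - (A + B + C) * x) * (D + A * x ^ 2) ≤ 1 := by
      generalize (A + B + C) * x = s at *
      nlinarith [mul_nonneg hs (by linarith : 0 ≤ D + A * x ^ 2 - 1)]
    nlinarith [mul_le_mul_of_nonneg_left key hAx.le]
  have h6 : 0 ≤ A * (A + B + C) * x ^ 3 := by positivity
  rw [abs_le]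
  constructor <;> linarith

theorem stmt_11 (T K : ℕ) (hK : 0 < K) (hKT : K < T)
    (a b c d : Fin K → ℝ) (ha : ∀ k, 0 < a k) (hb : ∀ k, 0 ≤ b k)
    (hc : ∀ k, 0 ≤ c k) (hd : ∀ k, 0 ≤ d k)
    (τ : ℝ) (hτ : 0 < τ) (hτT : τ < T) :
    (fun pu : ℝ =>
        (1 - τ / T) * ∑ k : Fin K, Real.logb 2
          (1 + a k * τ * pu ^ 2 /
            (b k * τ * pu ^ 2 + c k * pu + d k * τ * pu + 1)) -
        Real.logb 2 (Real.exp 1) * (1 - τ / T) * (∑ k : Fin K, a k * τ) * pu ^ 2)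
      =O[𝓝[>] (0 : ℝ)] fun pu => pu ^ 3 := by
  have hk : ∀ k ∈ (Finset.univ : Finset (Fin K)), (fun pu : ℝ =>
      Real.log (1 + a k * τ * pu ^ 2 /
            (b k * τ * pu ^ 2 + c k * pu + d k * τ * pu + 1)) - a k * τ * pu ^ 2)
      =O[𝓝[>] (0 : ℝ)] fun pu => pu ^ 3 := by
    intro k _
    refine IsBigO.of_bound (a k * τ * (a k * τ + b k * τ + (c k + d k * τ))) ?_
    filter_upwards [Ioo_mem_nhdsGT (zero_lt_one' ℝ)] with x hx
    have h := aux_log (a k * τ) (b k * τ) (c k + d k * τ) (mul_pos (ha k) hτ)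
      (mul_nonneg (hb k) hτ.le) (add_nonneg (hc k) (mul_nonneg (hd k) hτ.le)) x hx.1 hx.2
    have e : b k * τ * x ^ 2 + (c k + d k * τ) * x + 1
        = b k * τ * x ^ 2 + c k * x + d k * τ * x + 1 := by ring
    rw [e] at h
    rw [Real.norm_eq_abs, Real.norm_eq_abs, abs_of_pos (pow_pos hx.1 3)]
    exact h
  refine ((IsBigO.fun_sum hk).const_mul_left ((1 - τ / T) / Real.log 2)).congr_left ?_
  intro x
  simp only [Real.logb, Real.log_exp, Finset.sum_sub_distrib, ← Finset.sum_div, ← Finset.sum_mul]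
  ring
end

section
/- Fix τ with 0 < τ < T and set p_p = p_u, and define the bit energy η(p_u) = p_u / S(p_u) for p_u > 0, where S(p_u) = (1 − τ/T) Σ_{k=1}^K log₂(1 + a_k τ p_u² / (b_k τ p_u² + c_k p_u + d_k τ p_u + 1)). Then S(p_u) > 0 for every p_u > 0, and η(p_u) → +∞ as p_u → 0⁺. Hence, with equal pilot and data powers, reducing the transmit power below some threshold increases the energy per bit, and the minimum bit energy is achieved at a strictly positive sum spectral efficiency. -/
open Finset Filter Topology

theorem stmt_12 (T K : ℕ) (hK : 0 < K) (hKT : K < T)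
    (a b c d : Fin K → ℝ) (ha : ∀ k, 0 < a k) (hb : ∀ k, 0 ≤ b k)
    (hc : ∀ k, 0 ≤ c k) (hd : ∀ k, 0 ≤ d k)
    (τ : ℝ) (hτ : 0 < τ) (hτT : τ < T) :
    (∀ pu : ℝ, 0 < pu →
      0 < (1 - τ / T) * ∑ k : Fin K, Real.logb 2
        (1 + a k * τ * pu ^ 2 /
          (b k * τ * pu ^ 2 + c k * pu + d k * τ * pu + 1))) ∧
    Tendsto (fun pu : ℝ => pu /
        ((1 - τ / T) * ∑ k : Fin K, Real.logb 2
          (1 + a k * τ * pu ^ 2 /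
            (b k * τ * pu ^ 2 + c k * pu + d k * τ * pu + 1))))
      (𝓝[>] (0 : ℝ)) atTop := by
  have hT : (0 : ℝ) < T := hτ.trans hτT
  have hf : 0 < 1 - τ / T := by
    rw [sub_pos, div_lt_one hT]; exact hτT
  haveI : Nonempty (Fin K) := ⟨⟨0, hK⟩⟩
  have hl : 0 < Real.log 2 := Real.log_pos (by norm_num)
  have hden : ∀ pu : ℝ, 0 < pu → ∀ k,
      1 ≤ b k * τ * pu ^ 2 + c k * pu + d k * τ * pu + 1 := by
    intro pu hp k
    have h1 : 0 ≤ b k * τ * pu ^ 2 := mul_nonneg (mul_nonneg (hb k) hτ.le) (sq_nonneg _)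
    have h2 : 0 ≤ c k * pu := mul_nonneg (hc k) hp.le
    have h3 : 0 ≤ d k * τ * pu := mul_nonneg (mul_nonneg (hd k) hτ.le) hp.le
    linarith
  have hnum : ∀ pu : ℝ, 0 < pu → ∀ k, 0 < a k * τ * pu ^ 2 := by
    intro pu hp k
    exact mul_pos (mul_pos (ha k) hτ) (pow_pos hp 2)
  have hpos : ∀ pu : ℝ, 0 < pu →
      0 < (1 - τ / T) * ∑ k : Fin K, Real.logb 2
        (1 + a k * τ * pu ^ 2 /
          (b k * τ * pu ^ 2 + c k * pu + d k * τ * pu + 1)) := by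
    intro pu hp
    refine mul_pos hf (Finset.sum_pos (fun k _ => ?_) Finset.univ_nonempty)
    refine Real.logb_pos (by norm_num) ?_
    have := div_pos (hnum pu hp k) (zero_lt_one.trans_le (hden pu hp k))
    linarith
  refine ⟨hpos, ?_⟩
  set C : ℝ := (1 - τ / T) * ∑ k : Fin K, a k * τ / Real.log 2 with hC
  have hCpos : 0 < C := mul_pos hf
    (Finset.sum_pos (fun k _ => div_pos (mul_pos (ha k) hτ) hl) Finset.univ_nonempty)
  have hlim : Tendsto (fun pu : ℝ => C⁻¹ * pu⁻¹) (𝓝[>] (0 : ℝ)) atTop :=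
    tendsto_inv_nhdsGT_zero.const_mul_atTop (inv_pos.mpr hCpos)
  refine tendsto_atTop_mono' _ ?_ hlim
  filter_upwards [self_mem_nhdsWithin] with pu hp
  have hp : 0 < pu := hp
  have hS : (1 - τ / T) * ∑ k : Fin K, Real.logb 2
        (1 + a k * τ * pu ^ 2 /
          (b k * τ * pu ^ 2 + c k * pu + d k * τ * pu + 1)) ≤ C * pu ^ 2 := by
    rw [hC, mul_assoc, Finset.sum_mul]
    refine mul_le_mul_of_nonneg_left (Finset.sum_le_sum fun k _ => ?_) hf.le
    have h0 := div_pos (hnum pu hp k) (zero_lt_one.trans_le (hden pu hp k))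
    have h1 := div_le_self (hnum pu hp k).le (hden pu hp k)
    have h2 := Real.log_le_sub_one_of_pos (add_pos one_pos h0)
    rw [Real.logb, div_mul_eq_mul_div]
    exact div_le_div_of_nonneg_right (by linarith) hl.le
  calc C⁻¹ * pu⁻¹ = pu / (C * pu ^ 2) := by field_simp
    _ ≤ _ := div_le_div_of_nonneg_left hp.le (hpos pu hp) hS
end

section
/- The objective of problem P₂, namely p ↦ (1 − K/T) Σ_{k=1}^K log₂(1 + f_k(p)), is continuous on the compact interval [0, P/(T − K)] and therefore attains a global maximum at some p* ∈ [0, P/(T − K)]; consequently problem P₁ also admits a global maximizer, which can be taken of the form (τ, p_p, p_u) = (K, (P − (T − K)p*)/K, p*). -/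
open Finset

/-- Objective of problem `P₂`. -/
noncomputable def objP2 (T K : ℕ) (P : ℝ) (a b c d : Fin K → ℝ) (p : ℝ) : ℝ :=
  (1 - (K : ℝ) / T) * ∑ k : Fin K, Real.logb 2
    (1 + a k * (P - ((T : ℝ) - K) * p) * p /
      (b k * (P - ((T : ℝ) - K) * p) * p + c k * p +
        d k * (P - ((T : ℝ) - K) * p) + 1))

lemma sinr_scale (A B C D E s p : ℝ) (hA : 0 < A) (hB : 0 ≤ B) (hC : 0 ≤ C) (hD : 0 ≤ D)
    (hE : 0 ≤ E) (hs : 0 ≤ s) (hs1 : s ≤ 1) (hp : 0 ≤ p) :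
    s * Real.logb 2 (1 + A * E * p / (B * E * p + C * p + D * E + 1)) ≤
      Real.logb 2 (1 + A * E * (s * p) / (B * E * (s * p) + C * (s * p) + D * E + 1)) := by
  have hx : 0 ≤ A * E * p / (B * E * p + C * p + D * E + 1) := by positivity
  rw [← Real.logb_rpow_eq_mul_logb_of_pos (by positivity)]
  apply Real.logb_le_logb_of_le (by norm_num) (by positivity)
  refine (rpow_one_add_le_one_add_mul_self (by linarith) hs hs1).trans ?_
  have hsp : s * p ≤ p := by nlinarith
  have : s * (A * E * p / (B * E * p + C * p + D * E + 1)) =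
      A * E * (s * p) / (B * E * p + C * p + D * E + 1) := by ring
  rw [this]
  gcongr

lemma sumSE_eq_objP2 (T K : ℕ) (hK : 0 < K) (P : ℝ) (a b c d : Fin K → ℝ) (p : ℝ) :
    sumSE T K a b c d K ((P - ((T : ℝ) - K) * p) / K) p = objP2 T K P a b c d p := by
  have hK' : (K : ℝ) ≠ 0 := by positivity
  have h : ∀ x y : ℝ, x * K * (y / K) = x * y := by
    intro x y
    field_simp
  simp only [sumSE, objP2, h]

theorem stmt_13 (T K : ℕ) (hK : 0 < K) (hKT : K < T) (P : ℝ) (hP : 0 < P)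
    (a b c d : Fin K → ℝ) (ha : ∀ k, 0 < a k) (hb : ∀ k, 0 ≤ b k)
    (hc : ∀ k, 0 ≤ c k) (hd : ∀ k, 0 ≤ d k) :
    ContinuousOn (objP2 T K P a b c d) (Set.Icc (0 : ℝ) (P / ((T : ℝ) - K))) ∧
    ∃ pstar ∈ Set.Icc (0 : ℝ) (P / ((T : ℝ) - K)),
      (∀ p ∈ Set.Icc (0 : ℝ) (P / ((T : ℝ) - K)),
        objP2 T K P a b c d p ≤ objP2 T K P a b c d pstar) ∧
      FeasibleP1 T K P K ((P - ((T : ℝ) - K) * pstar) / K) pstar ∧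
      (∀ (τ : ℕ) (pp pu : ℝ), FeasibleP1 T K P τ pp pu →
        sumSE T K a b c d τ pp pu ≤
          sumSE T K a b c d K ((P - ((T : ℝ) - K) * pstar) / K) pstar) := by
  have hK' : (0 : ℝ) < K := by exact_mod_cast hK
  have hTK : (0 : ℝ) < (T : ℝ) - K := sub_pos.2 (by exact_mod_cast hKT)
  have hT : (0 : ℝ) < T := by linarith
  have hmem : ∀ p ∈ Set.Icc (0 : ℝ) (P / ((T : ℝ) - K)), 0 ≤ p ∧ 0 ≤ P - ((T : ℝ) - K) * p := by
    intro p hp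
    refine ⟨hp.1, ?_⟩
    have := (le_div_iff₀ hTK).1 hp.2
    linarith
  have hcont : ContinuousOn (objP2 T K P a b c d) (Set.Icc (0 : ℝ) (P / ((T : ℝ) - K))) := by
    unfold objP2
    refine continuousOn_const.mul (continuousOn_finsetSum _ fun k _ => ?_)
    have hpos : ∀ p ∈ Set.Icc (0 : ℝ) (P / ((T : ℝ) - K)),
        0 < b k * (P - ((T : ℝ) - K) * p) * p + c k * p +
          d k * (P - ((T : ℝ) - K) * p) + 1 := by
      intro p hp
      obtain ⟨h1, h2⟩ := hmem p hp
      have := hb k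
      have := hc k
      have := hd k
      positivity
    refine ContinuousOn.logb ?_ ?_
    · refine continuousOn_const.add (ContinuousOn.div (by fun_prop) (by fun_prop) ?_)
      intro p hp
      exact (hpos p hp).ne'
    · intro p hp
      obtain ⟨h1, h2⟩ := hmem p hp
      have h3 := hpos p hp
      have := ha k
      have : 0 ≤ a k * (P - ((T : ℝ) - K) * p) * p := by positivity
      have := div_nonneg this h3.le
      linarith
  refine ⟨hcont, ?_⟩
  obtain ⟨q, hq, hmax⟩ := isCompact_Icc.exists_isMaxOn
    (Set.nonempty_Icc.2 (div_nonneg hP.le hTK.le)) hcont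
  have hmax' : ∀ p ∈ Set.Icc (0 : ℝ) (P / ((T : ℝ) - K)),
      objP2 T K P a b c d p ≤ objP2 T K P a b c d q := fun p hp => hmax hp
  obtain ⟨hq0, hq1⟩ := hmem q hq
  refine ⟨q, hq, hmax', ⟨le_rfl, hKT.le, div_nonneg hq1 hK'.le, hq0, ?_⟩, ?_⟩
  · field_simp
    ring
  intro τ pp pu ⟨h1, h2, hpp, hpu, hsum⟩
  rw [sumSE_eq_objP2 T K hK]
  have h1' : (K : ℝ) ≤ τ := by exact_mod_cast h1
  have h2' : (τ : ℝ) ≤ T := by exact_mod_cast h2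
  obtain ⟨s, hs⟩ : ∃ s : ℝ, s = ((T : ℝ) - τ) / ((T : ℝ) - K) := ⟨_, rfl⟩
  have hs0 : 0 ≤ s := by rw [hs]; exact div_nonneg (by linarith) hTK.le
  have hs1 : s ≤ 1 := by rw [hs, div_le_one hTK]; linarith
  have hsT : s * ((T : ℝ) - K) = T - τ := by rw [hs]; field_simp
  have hE0 : 0 ≤ (τ : ℝ) * pp := by positivity
  have hE : P - ((T : ℝ) - K) * (s * pu) = τ * pp := by
    linear_combination -hsum - pu * hsT
  refine le_trans ?_ (hmax' (s * pu) ⟨by positivity, ?_⟩)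
  · unfold sumSE objP2
    rw [hE]
    have e1 : 1 - (τ : ℝ) / T = (1 - (K : ℝ) / T) * s := by
      field_simp
      linarith
    have e2 : 0 ≤ 1 - (K : ℝ) / T := by
      rw [sub_nonneg, div_le_one hT]
      linarith
    rw [e1, mul_assoc, Finset.mul_sum]
    refine mul_le_mul_of_nonneg_left (Finset.sum_le_sum fun k _ => ?_) e2
    have := sinr_scale (a k) (b k) (c k) (d k) (τ * pp) s pu (ha k) (hb k) (hc k) (hd k)
      hE0 hs0 hs1 hpu
    simpa only [mul_assoc] using this
  · rw [le_div_iff₀ hTK]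
    linarith
end
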